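/- Let n ≥ 4 and let φ₀ : ℝⁿ₊ → ℝ be defined by φ₀(x) = (α_n/ω_{n−1})·Σ_{i=1}^{n−1} k_i ∫_{ℝ^{n−1}} (y_i²/(1+|y'|²)^{n/2})·|x−(y',0)|^{−(n−2)} dy', where k_i are real constants, α_n = (n(n−2))^{(n−2)/4}, and ω_{n−1} is the surface measure of the unit sphere in ℝⁿ. Then there is a constant C > 0 such that |φ₀(x)| ≤ C/(1+|x|)^{n−3} for all x ∈ ℝⁿ₊. -/

import Mathlib

open MeasureTheory

/-!
Write `R = 1 + ‖x‖`. Since `R ≤ (1 + ‖y‖) + ‖x - (y, 0)‖`, the larger of the two summands is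
comparable to `R` plus the smaller one. Hence `(1 + ‖y‖) ^ (-p) * ‖x - (y, 0)‖ ^ (-q)` is dominated
by two radial kernels at scale `R`, one centred at the origin and one at the orthogonal projection
of `x` to the boundary. In dimension `d` each kernel is integrable for `p, q < d < p + q`, and by
scaling its integral is a multiple of `R ^ (d - (p + q))`. The correction `φ₀` is the case
`p = q = n - 2`, `d = n - 1`.
-/

open Asymptotics Filter Module Set

section RadialKernel

variable {E : Type*} [NormedAddCommGroup E]

/-- The radial kernel with a singularity of order `p` at the origin and decay of order `p + q` at
infinity, with the crossover at distance `R`. It is used to dominate the integrand of a potential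
away from `y = 0`, where for `p ≠ 0` it takes the junk value `0`. -/
noncomputable def radialKernel (p q R : ℝ) (y : E) : ℝ :=
  ‖y‖ ^ (-p) * (R + ‖y‖) ^ (-q)

variable [NormedSpace ℝ E] {p q R : ℝ}

lemma radialKernel_eq_mul_radialKernel_one (p q : ℝ) (hR : 0 < R) (y : E) :
    radialKernel p q R y = R ^ (-(p + q)) * radialKernel p q 1 (R⁻¹ • y) := by
  have hnorm : ‖y‖ = R * ‖R⁻¹ • y‖ := by
    rw [norm_smul, norm_inv, Real.norm_of_nonneg hR.le, mul_inv_cancel_left₀ hR.ne']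
  have hadd : R + ‖y‖ = R * (1 + ‖R⁻¹ • y‖) := by rw [hnorm]; ring
  rw [radialKernel, radialKernel, hadd, hnorm, Real.mul_rpow hR.le (by positivity),
    Real.mul_rpow hR.le (by positivity), neg_add, Real.rpow_add hR]
  ring

lemma integrableOn_rpow_mul_one_add_rpow_neg {s : ℝ} (hs : 0 < s) (hsq : s < q) :
    IntegrableOn (fun r : ℝ => r ^ (s - 1) * (1 + r) ^ (-q)) (Ioi 0) := by
  have hcont : ContinuousOn (fun r : ℝ => (1 + r) ^ (-q)) (Ici 0) :=
    (continuousOn_const.add continuousOn_id).rpow_const fun r (hr : 0 ≤ r) =>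
      Or.inl (add_pos_of_pos_of_nonneg one_pos hr).ne'
  refine mellin_convergent_of_isBigO_scalar (b := 0)
    ((hcont.mono Ioi_subset_Ici_self).locallyIntegrableOn measurableSet_Ioi) ?_ hsq ?_ hs
  · refine IsBigO.of_bound 1 ((eventually_gt_atTop 0).mono fun r hr => ?_)
    rw [one_mul, Real.norm_of_nonneg (by positivity), Real.norm_of_nonneg (by positivity)]
    exact Real.rpow_le_rpow_of_nonpos hr (by linarith) (by linarith)
  · refine IsBigO.of_bound 1 (eventually_mem_nhdsWithin.mono fun r (hr : 0 < r) => ?_)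
    rw [one_mul, neg_zero, Real.rpow_zero, norm_one, Real.norm_of_nonneg (by positivity)]
    exact Real.rpow_le_one_of_one_le_of_nonpos (by linarith) (by linarith)

variable [FiniteDimensional ℝ E] [MeasurableSpace E] [BorelSpace E]
  (μ : Measure E) [μ.IsAddHaarMeasure]

lemma integral_radialKernel (p q : ℝ) (hR : 0 < R) :
    ∫ y : E, radialKernel p q R y ∂μ =
      (∫ y : E, radialKernel p q 1 y ∂μ) * R ^ (-(p + q - finrank ℝ E)) := by
  simp_rw [radialKernel_eq_mul_radialKernel_one p q hR]
  rw [integral_const_mul, Measure.integral_comp_inv_smul_of_nonneg μ _ hR.le, smul_eq_mul,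
    neg_sub, sub_eq_neg_add, Real.rpow_add hR, Real.rpow_natCast]
  ring

variable [Nontrivial E]

lemma integrable_radialKernel_one (hp : p < finrank ℝ E) (hpq : finrank ℝ E < p + q) :
    Integrable (fun y : E => radialKernel p q 1 y) μ := by
  simp only [radialKernel]
  rw [integrable_fun_norm_addHaar μ (f := fun r : ℝ => r ^ (-p) * (1 + r) ^ (-q))]
  refine (integrableOn_rpow_mul_one_add_rpow_neg (sub_pos.2 hp) (by linarith)).congr_fun
    (fun r (hr : 0 < r) => ?_) measurableSet_Ioi
  have hdim : ((finrank ℝ E - 1 : ℕ) : ℝ) = finrank ℝ E - 1 := by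
    rw [Nat.cast_sub finrank_pos, Nat.cast_one]
  rw [smul_eq_mul, ← Real.rpow_natCast, hdim, ← mul_assoc, ← Real.rpow_add hr]
  ring_nf

lemma integrable_radialKernel (hp : p < finrank ℝ E) (hpq : finrank ℝ E < p + q) (hR : 0 < R) :
    Integrable (fun y : E => radialKernel p q R y) μ := by
  simp_rw [radialKernel_eq_mul_radialKernel_one p q hR]
  exact ((integrable_radialKernel_one μ hp hpq).comp_smul (inv_ne_zero hR.ne')).const_mul _

end RadialKernel

section Comparison

variable {A B R s t p q : ℝ}

lemma rpow_neg_mul_rpow_neg_le_of_add_le (hp : 0 ≤ p) (hq : 0 ≤ q) (hR : 0 ≤ R) (hs : 0 < s)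
    (hsA : s ≤ A) (hB : R + s ≤ 3 * B) :
    A ^ (-p) * B ^ (-q) ≤ 3 ^ q * (s ^ (-p) * (R + s) ^ (-q)) := by
  have hA : A ^ (-p) ≤ s ^ (-p) := Real.rpow_le_rpow_of_nonpos hs hsA (by linarith)
  have hB : B ^ (-q) ≤ 3 ^ q * (R + s) ^ (-q) :=
    calc B ^ (-q) ≤ (3⁻¹ * (R + s)) ^ (-q) :=
          Real.rpow_le_rpow_of_nonpos (by positivity) (by linarith) (by linarith)
      _ = 3 ^ q * (R + s) ^ (-q) := by
          rw [Real.mul_rpow (by positivity) (by positivity), Real.inv_rpow (by positivity),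
            Real.rpow_neg (by positivity), inv_inv]
  calc A ^ (-p) * B ^ (-q) ≤ s ^ (-p) * (3 ^ q * (R + s) ^ (-q)) := by
        have hB0 : 0 ≤ B := by linarith
        gcongr
    _ = _ := by ring

lemma rpow_neg_mul_rpow_neg_le_add (hp : 0 ≤ p) (hq : 0 ≤ q) (hR : 0 ≤ R) (hs : 0 < s)
    (ht : 0 < t) (hsA : s ≤ A) (htB : t ≤ B) (hAB : R ≤ A + B) :
    A ^ (-p) * B ^ (-q) ≤
      3 ^ q * (s ^ (-p) * (R + s) ^ (-q)) + 3 ^ p * (t ^ (-q) * (R + t) ^ (-p)) := by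
  rcases le_total A B with h | h
  · exact (rpow_neg_mul_rpow_neg_le_of_add_le hp hq hR hs hsA (by linarith)).trans
      (le_add_of_nonneg_right (by positivity))
  · rw [mul_comm (A ^ (-p))]
    exact (rpow_neg_mul_rpow_neg_le_of_add_le hq hp hR ht htB (by linarith)).trans
      (le_add_of_nonneg_left (by positivity))

end Comparison

section Projection

variable {E F : Type*} [NormedAddCommGroup E] [InnerProductSpace ℝ E] [CompleteSpace E]
  [NormedAddCommGroup F] [InnerProductSpace ℝ F] [CompleteSpace F]
  (ι : E →ₗᵢ[ℝ] F) {p q : ℝ}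

lemma norm_sub_adjoint_apply_le (x : F) (y : E) :
    ‖y - ι.toContinuousLinearMap.adjoint x‖ ≤ ‖x - ι y‖ := by
  set L := ι.toContinuousLinearMap
  have hy : L.adjoint (ι y) = y := ext_inner_right ℝ fun w => by
    rw [L.adjoint_inner_left]
    exact ι.inner_map_map y w
  calc ‖y - L.adjoint x‖ = ‖L.adjoint (x - ι y)‖ := by rw [map_sub, hy, norm_sub_rev]
    _ ≤ ‖L.adjoint‖ * ‖x - ι y‖ := L.adjoint.le_opNorm _
    _ ≤ ‖x - ι y‖ := by
      rw [LinearIsometryEquiv.norm_map]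
      exact mul_le_of_le_one_left (norm_nonneg _) ι.norm_toContinuousLinearMap_le

lemma one_add_norm_rpow_neg_mul_norm_sub_rpow_neg_le (hp : 0 ≤ p) (hq : 0 ≤ q) {x : F} {y : E}
    (hy : y ≠ 0) (hyx : y ≠ ι.toContinuousLinearMap.adjoint x) :
    (1 + ‖y‖) ^ (-p) * ‖x - ι y‖ ^ (-q) ≤ 3 ^ q * radialKernel p q (1 + ‖x‖) y +
      3 ^ p * radialKernel q p (1 + ‖x‖) (y - ι.toContinuousLinearMap.adjoint x) := by
  have htri : ‖x‖ ≤ ‖x - ι y‖ + ‖y‖ := by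
    simpa only [ι.norm_map] using norm_le_norm_sub_add x (ι y)
  exact rpow_neg_mul_rpow_neg_le_add hp hq (by positivity) (norm_pos_iff.2 hy)
    (norm_pos_iff.2 (sub_ne_zero.2 hyx)) (by linarith) (norm_sub_adjoint_apply_le ι x y)
    (by linarith)

end Projection

section Potential

variable {E F G : Type*} [NormedAddCommGroup E] [InnerProductSpace ℝ E] [FiniteDimensional ℝ E]
  [NormedAddCommGroup F] [InnerProductSpace ℝ F] [CompleteSpace F]
  [NormedAddCommGroup G] [NormedSpace ℝ G] (ι : E →ₗᵢ[ℝ] F) {p q : ℝ}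
  [MeasurableSpace E] [BorelSpace E] (μ : Measure E) [μ.IsAddHaarMeasure]

lemma norm_integral_norm_sub_rpow_neg_smul_le (hp : p < finrank ℝ E) (hq : q < finrank ℝ E)
    (hpq : finrank ℝ E < p + q) {c : ℝ} (hc : 0 ≤ c) {g : E → G}
    (hg : ∀ y, ‖g y‖ ≤ c * (1 + ‖y‖) ^ (-p)) (x : F) :
    ‖∫ y, ‖x - ι y‖ ^ (-q) • g y ∂μ‖ ≤
      c * (3 ^ q * ∫ y : E, radialKernel p q 1 y ∂μ + 3 ^ p * ∫ y : E, radialKernel q p 1 y ∂μ) *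
        (1 + ‖x‖) ^ (-(p + q - finrank ℝ E)) := by
  have hdim : (0 : ℝ) < finrank ℝ E := by linarith
  have : Nontrivial E := nontrivial_of_finrank_pos (R := ℝ) (by exact_mod_cast hdim)
  set z := ι.toContinuousLinearMap.adjoint x
  have hR : 0 < 1 + ‖x‖ := by positivity
  have hint := (integrable_radialKernel μ hp hpq hR).const_mul (3 ^ q)
  have hint' := ((integrable_radialKernel μ hq (by rwa [add_comm]) hR).comp_sub_right z).const_mul
    (3 ^ p)
  calc ‖∫ y, ‖x - ι y‖ ^ (-q) • g y ∂μ‖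
      ≤ ∫ y, c * (3 ^ q * radialKernel p q (1 + ‖x‖) y +
          3 ^ p * radialKernel q p (1 + ‖x‖) (y - z)) ∂μ := by
        refine norm_integral_le_of_norm_le ((hint.add hint').const_mul c) ?_
        filter_upwards [Measure.ae_ne μ 0, Measure.ae_ne μ z] with y hy hyz
        calc ‖‖x - ι y‖ ^ (-q) • g y‖ = ‖x - ι y‖ ^ (-q) * ‖g y‖ := by
              rw [norm_smul, Real.norm_of_nonneg (by positivity)]
          _ ≤ ‖x - ι y‖ ^ (-q) * (c * (1 + ‖y‖) ^ (-p)) := by gcongr; exact hg y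
          _ = c * ((1 + ‖y‖) ^ (-p) * ‖x - ι y‖ ^ (-q)) := by ring
          _ ≤ _ := mul_le_mul_of_nonneg_left (one_add_norm_rpow_neg_mul_norm_sub_rpow_neg_le ι
              (by linarith) (by linarith) hy hyz) hc
    _ = _ := by
        rw [integral_const_mul, integral_add hint hint', integral_const_mul, integral_const_mul,
          integral_sub_right_eq_self (radialKernel q p (1 + ‖x‖)) z,
          integral_radialKernel μ p q hR, integral_radialKernel μ q p hR, add_comm q p]
        ring

theorem isBigO_integral_norm_sub_rpow_neg_smul (hp : p < finrank ℝ E) (hq : q < finrank ℝ E)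
    (hpq : finrank ℝ E < p + q) {g : E → G} (hg : g =O[⊤] fun y => (1 + ‖y‖) ^ (-p)) :
    (fun x : F => ∫ y, ‖x - ι y‖ ^ (-q) • g y ∂μ) =O[⊤]
      fun x => (1 + ‖x‖) ^ (-(p + q - finrank ℝ E)) := by
  obtain ⟨c, hc, hgc⟩ := hg.exists_nonneg
  have hgc' : ∀ y, ‖g y‖ ≤ c * (1 + ‖y‖) ^ (-p) := fun y =>
    (isBigOWith_top.1 hgc y).trans_eq (by rw [Real.norm_of_nonneg (by positivity)])
  exact isBigO_top.2 ⟨_, fun x =>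
    (norm_integral_norm_sub_rpow_neg_smul_le ι μ hp hq hpq hc hgc' x).trans_eq
      (by rw [Real.norm_of_nonneg (by positivity)])⟩

end Potential

section Euclidean

lemma isBigO_sq_div_one_add_norm_sq_rpow {E : Type*} [NormedAddCommGroup E] {f : E → ℝ}
    (hf : ∀ y, |f y| ≤ ‖y‖) {s : ℝ} (hs : 2 < s) :
    (fun y => f y ^ 2 / (1 + ‖y‖ ^ 2) ^ (s / 2)) =O[⊤] fun y => (1 + ‖y‖) ^ (-(s - 2)) := by
  refine isBigO_top.2 ⟨2 ^ ((s - 2) / 2), fun y => ?_⟩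
  have hpos : 0 < 1 + ‖y‖ ^ 2 := by positivity
  have hsq : f y ^ 2 ≤ 1 + ‖y‖ ^ 2 := by
    linarith [sq_le_sq' (neg_le_of_abs_le (hf y)) (le_of_abs_le (hf y))]
  rw [Real.norm_of_nonneg (by positivity), Real.norm_of_nonneg (by positivity)]
  calc f y ^ 2 / (1 + ‖y‖ ^ 2) ^ (s / 2)
      ≤ (1 + ‖y‖ ^ 2) / (1 + ‖y‖ ^ 2) ^ (s / 2) := by gcongr
    _ = (1 + ‖y‖ ^ 2) ^ (-(s - 2) / 2) := by
        rw [show -(s - 2) / 2 = 1 - s / 2 by ring, Real.rpow_sub hpos, Real.rpow_one]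
    _ ≤ _ := rpow_neg_one_add_norm_sq_le y (by linarith)

/-- The inclusion `y ↦ (y, 0)` of `ℝᵐ` in `ℝⁿ`; for `m = n - 1` it parametrizes the boundary of the
half-space. -/
noncomputable def euclideanInclusion {m n : ℕ} (hmn : m ≤ n) :
    EuclideanSpace ℝ (Fin m) →ₗᵢ[ℝ] EuclideanSpace ℝ (Fin n) where
  toFun y := (WithLp.equiv 2 _).symm fun j : Fin n => if h : (j : ℕ) < m then y ⟨j, h⟩ else 0
  map_add' y z := by ext j; by_cases h : (j : ℕ) < m <;> simp [h]
  map_smul' c y := by ext j; by_cases h : (j : ℕ) < m <;> simp [h]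
  norm_map' y := by
    rw [EuclideanSpace.norm_eq, EuclideanSpace.norm_eq]
    refine congrArg Real.sqrt (Fintype.sum_of_injective _ (Fin.castLE_injective hmn) _ _
      (fun j hj => ?_) fun i => ?_).symm
    · have hjm : ¬ (j : ℕ) < m := fun h => hj ⟨⟨j, h⟩, rfl⟩
      simp [hjm]
    · simp

/-- The harmonic correction `φ₀` to the projected bubble with boundary curvatures `k i`, given by
its Green representation on the half-space; the formula is read on all of `ℝⁿ`. -/
noncomputable def harmonicCorrection (n : ℕ) (k : Fin (n - 1) → ℝ)
    (x : EuclideanSpace ℝ (Fin n)) : ℝ :=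
  ((n : ℝ) * ((n : ℝ) - 2)) ^ (((n : ℝ) - 2) / 4) /
      ((n : ℝ) * (volume (Metric.ball (0 : EuclideanSpace ℝ (Fin n)) 1)).toReal) *
    ∑ i, k i * ∫ y : EuclideanSpace ℝ (Fin (n - 1)),
      y i ^ 2 / (1 + ‖y‖ ^ 2) ^ ((n : ℝ) / 2) *
        (1 / ‖x - euclideanInclusion (Nat.sub_le n 1) y‖ ^ ((n : ℝ) - 2))

theorem isBigO_harmonicCorrection {n : ℕ} (hn : 4 ≤ n) (k : Fin (n - 1) → ℝ) :
    harmonicCorrection n k =O[⊤] fun x => (1 + ‖x‖) ^ (-((n : ℝ) - 3)) := by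
  have hn' : (4 : ℝ) ≤ n := by exact_mod_cast hn
  have hdim : (finrank ℝ (EuclideanSpace ℝ (Fin (n - 1))) : ℝ) = n - 1 := by
    rw [finrank_euclideanSpace_fin, Nat.cast_sub (by omega), Nat.cast_one]
  refine (IsBigO.fun_sum fun i _ => IsBigO.const_mul_left ?_ (k i)).const_mul_left _
  have hpotential := isBigO_integral_norm_sub_rpow_neg_smul
    (euclideanInclusion (Nat.sub_le n 1)) volume (p := n - 2) (q := n - 2)
    (by linarith) (by linarith) (by linarith)
    (isBigO_sq_div_one_add_norm_sq_rpow (fun y => PiLp.norm_apply_le y i) (by linarith))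
  refine hpotential.congr (fun x => ?_) fun x => ?_
  · simp only [smul_eq_mul, Real.rpow_neg (norm_nonneg _), one_div, mul_comm]
  · rw [hdim]
    ring_nf

end Euclidean

theorem phi0_decay_general (n : ℕ) (hn : 4 ≤ n) (k : Fin (n - 1) → ℝ) :
    ∃ C : ℝ, 0 < C ∧ ∀ x, |harmonicCorrection n k x| ≤ C / (1 + ‖x‖) ^ ((n : ℝ) - 3) := by
  obtain ⟨C, hC, hbound⟩ := (isBigO_harmonicCorrection hn k).exists_pos
  refine ⟨C, hC, fun x => (isBigOWith_top.1 hbound x).trans_eq ?_⟩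
  rw [Real.norm_of_nonneg (by positivity), Real.rpow_neg (by positivity), div_eq_mul_inv]

theorem phi0_decay (n : ℕ) (hn : 4 ≤ n) (k : Fin (n - 1) → ℝ) :
    let αn : ℝ := ((n : ℝ) * ((n : ℝ) - 2)) ^ (((n : ℝ) - 2) / 4)
    -- ω is the surface measure of the unit sphere `S^{n-1} ⊂ ℝⁿ`,
    -- i.e. `n` times the volume of the unit ball in `ℝⁿ`.
    let ω : ℝ := (n : ℝ) *
      (volume (Metric.ball (0 : EuclideanSpace ℝ (Fin n)) 1)).toReal
    -- `ext y = (y', 0)` is the embedding of `ℝ^{n-1}` as the boundary of `ℝⁿ₊`.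
    let ext : EuclideanSpace ℝ (Fin (n - 1)) → EuclideanSpace ℝ (Fin n) := fun y =>
      (WithLp.equiv 2 _).symm (fun j : Fin n =>
        if h : (j : ℕ) < n - 1 then y ⟨j, h⟩ else 0)
    let φ₀ : EuclideanSpace ℝ (Fin n) → ℝ := fun x =>
      (αn / ω) * ∑ i : Fin (n - 1), k i *
        ∫ y : EuclideanSpace ℝ (Fin (n - 1)),
          (y i) ^ 2 / (1 + ‖y‖ ^ 2) ^ ((n : ℝ) / 2) *
            (1 / ‖x - ext y‖ ^ ((n : ℝ) - 2))
    ∃ C : ℝ, 0 < C ∧ ∀ x : EuclideanSpace ℝ (Fin n), 0 < x ⟨n - 1, by omega⟩ →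
      |φ₀ x| ≤ C / (1 + ‖x‖) ^ ((n : ℝ) - 3) := by
  intro αn ω ext φ₀
  obtain ⟨C, hC, hbound⟩ := phi0_decay_general n hn k
  exact ⟨C, hC, fun x _ => hbound x⟩
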